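/- Let R and S be subrings of ℂ each closed under complex conjugation, set T = R ∩ S, and let F_T = {a/b : a, b ∈ T, b ≠ 0} and F_R = {a/b : a, b ∈ R, b ≠ 0}, subfields of ℂ. Let α ∈ S be algebraic over F_T with minimal polynomial p over F_T of degree d, assume every element of S can be written as an F_T-linear combination of powers of α, and let K ⊆ ℂ be the splitting field of p over F_T. Let E := F_R(α) be the subfield of ℂ generated by F_R and α. Assume: K is closed under complex conjugation; every field embedding σ : E → ℂ fixing F_R pointwise satisfies σ(conj z) = conj(σ z) for all z ∈ E (the Kroneckerian condition); and F_T = K ∩ F_R. Let Φ be a pre-embedding of dimension k from S to R. Then there exists a nonzero complex matrix Π indexed by Fin k, all of whose entries lie in E, with Πᴴ = Π and Π * Π = Π, such that for every s ∈ S: Φ₀(s) = Σ_σ (s • Π).map σ, where the sum ranges over all field embeddings σ : E → ℂ fixing F_R pointwise (there are finitely many), and (s • Π).map σ applies σ to each entry of s • Π (all entries of s • Π lie in E). In other words, Φ₀(s) is the relative field trace of s • Π from E to F_R, applied entrywise. -/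

import Mathlib

open Matrix

/-- A *pre-embedding of dimension `k` from `S` to `R`* (for `S R : Subring ℂ`, each closed
under complex conjugation): a family `toFun` assigning to every square complex matrix indexed
by a finite type `ι` (with all entries in `S`) a complex matrix indexed by `ι × Fin k` with all
entries in `R`, together with a fixed nonzero orthogonal projector `proj` on `Fin k` (the
catalytic projector), satisfying multiplicativity, additivity, unitality, compatibility with
conjugate transpose, compatibility with Kronecker products by matrices over `R ∩ S`, and the
catalytic condition `Φ(A) * (1 ⊗ Π) = A ⊗ Π`. -/
structure PreEmbedding (k : ℕ) (S R : Subring ℂ) : Type 1 where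
  toFun : ∀ (ι : Type) [Fintype ι] [DecidableEq ι],
    Matrix ι ι ℂ → Matrix (ι × Fin k) (ι × Fin k) ℂ
  proj : Matrix (Fin k) (Fin k) ℂ
  hS_conj : ∀ z ∈ S, (starRingEnd ℂ) z ∈ S
  hR_conj : ∀ z ∈ R, (starRingEnd ℂ) z ∈ R
  proj_ne_zero : proj ≠ 0
  proj_herm : proj.conjTranspose = proj
  proj_idem : proj * proj = proj
  mem_R : ∀ (ι : Type) [Fintype ι] [DecidableEq ι] (A : Matrix ι ι ℂ),
    (∀ i j, A i j ∈ S) → ∀ p q, toFun ι A p q ∈ R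
  map_mul : ∀ (ι : Type) [Fintype ι] [DecidableEq ι] (A B : Matrix ι ι ℂ),
    (∀ i j, A i j ∈ S) → (∀ i j, B i j ∈ S) → toFun ι (A * B) = toFun ι A * toFun ι B
  map_add : ∀ (ι : Type) [Fintype ι] [DecidableEq ι] (A B : Matrix ι ι ℂ),
    (∀ i j, A i j ∈ S) → (∀ i j, B i j ∈ S) → toFun ι (A + B) = toFun ι A + toFun ι B
  map_one : ∀ (ι : Type) [Fintype ι] [DecidableEq ι], toFun ι (1 : Matrix ι ι ℂ) = 1
  map_conjTranspose : ∀ (ι : Type) [Fintype ι] [DecidableEq ι] (A : Matrix ι ι ℂ),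
    (∀ i j, A i j ∈ S) → toFun ι Aᴴ = (toFun ι A)ᴴ
  map_kronecker : ∀ (ι κ : Type) [Fintype ι] [DecidableEq ι] [Fintype κ] [DecidableEq κ]
    (C : Matrix ι ι ℂ) (A : Matrix κ κ ℂ),
    (∀ i j, C i j ∈ R) → (∀ i j, C i j ∈ S) → (∀ i j, A i j ∈ S) →
    toFun (ι × κ) (Matrix.kroneckerMap (· * ·) C A) =
      Matrix.reindex (Equiv.prodAssoc ι κ (Fin k)).symm (Equiv.prodAssoc ι κ (Fin k)).symm
        (Matrix.kroneckerMap (· * ·) C (toFun κ A))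
  catalytic : ∀ (ι : Type) [Fintype ι] [DecidableEq ι] (A : Matrix ι ι ℂ),
    (∀ i j, A i j ∈ S) →
    toFun ι A * Matrix.kroneckerMap (· * ·) (1 : Matrix ι ι ℂ) proj =
      Matrix.kroneckerMap (· * ·) A proj

/-- `Φ₀ s`: the pre-embedding applied to the `1 × 1` matrix with entry `s`, reindexed to a
matrix indexed by `Fin k`. -/
def PreEmbedding.apply0 {k : ℕ} {S R : Subring ℂ} (E : PreEmbedding k S R) (s : ℂ) :
    Matrix (Fin k) (Fin k) ℂ :=
  Matrix.reindex (Equiv.punitProd (Fin k)) (Equiv.punitProd (Fin k))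
    (E.toFun Unit (Matrix.of fun _ _ => s))

/-!
The matrix `M = Φ₀(α)` has entries in `F_R`, commutes with its adjoint `Φ₀(conj α)`, and is
annihilated by the minimal polynomial `p` of `α` over `F_R`. Evaluating the Lagrange polynomial
`p / ((X - α) p'(α))` at `M` gives the spectral projector `Π` of `M` at the eigenvalue `α`, with
entries in `F_R(α)`; its conjugates `σ(Π)` are the spectral projectors at the conjugates `σ(α)`,
and they sum to `1` by Euler's formula. Hence `Φ₀(q(α)) = q(M) = ∑ σ, q(σ(α)) σ(Π)`. The catalytic
projector lies in the `α`-eigenspace of `M`, so `Π ≠ 0`, and `Π`, a normal idempotent, is Hermitian.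
-/

open Polynomial IntermediateField

theorem aeval_mul_of_mul_eq_smul {R A : Type*} [CommSemiring R] [Semiring A] [Algebra R A]
    {a b : A} {r : R} (h : a * b = r • b) (q : R[X]) : aeval a q * b = q.eval r • b := by
  have h_pow (n : ℕ) : a ^ n * b = r ^ n • b := by
    induction n with
    | zero => simp
    | succ n ih => rw [pow_succ, mul_assoc, h, mul_smul_comm, ih, smul_smul, pow_succ']
  induction q using Polynomial.induction_on' with
  | add p q hp hq => rw [map_add, add_mul, hp, hq, eval_add, add_smul]
  | monomial n c =>
    rw [aeval_monomial, mul_assoc, h_pow, ← Algebra.smul_def, smul_smul, eval_monomial]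

theorem isStarNormal_aeval {R A : Type*} [CommSemiring R] [Semiring A] [StarRing A] [Algebra R A]
    {a : A} [IsStarNormal a] (q : R[X]) : IsStarNormal (aeval a q) := by
  have commute_aeval {b : A} (hb : Commute b a) : Commute b (aeval a q) := by
    induction q using Polynomial.induction_on' with
    | add p q hp hq => simpa using hp.add_right hq
    | monomial n c =>
      simpa using (Algebra.commute_algebraMap_right c b).mul_right (hb.pow_right n)
  have h : Commute (star (aeval a q)) a := by
    simpa using (commute_aeval (star_comm_self' a)).symm.star_star
  exact ⟨commute_aeval h⟩

open scoped Matrix.Norms.L2Operator in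
theorem isHermitian_of_isIdempotentElem_of_isStarNormal {n : Type*} [Fintype n]
    {P : Matrix n n ℂ} (hP : IsIdempotentElem P) (hN : IsStarNormal P) : P.IsHermitian := by
  classical
  exact hP.isSelfAdjoint_iff_isStarNormal.mpr hN

theorem map_aeval_matrix {R S n : Type*} [CommSemiring R] [CommSemiring S] [Fintype n]
    [DecidableEq n] (f : R →+* S) (M : Matrix n n R) (q : R[X]) :
    (aeval M q).map f = aeval (M.map f) (q.map f) := by
  refine Polynomial.map_aeval_eq_aeval_map (ψ := f.mapMatrix (m := n)) ?_ q M
  ext r i j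
  simp [Matrix.algebraMap_matrix_apply, apply_ite f]

section Minpoly

variable {L : Type*} [Field L] {F K : Subfield L} {α : L}

theorem map_minpoly_dvd {f : L[X]} (hf : ∀ m, f.coeff m ∈ F) (hα : f.eval α = 0) :
    (minpoly F α).map (algebraMap F L) ∣ f := by
  obtain ⟨g, rfl⟩ := (lifts_iff_coeff_lifts (f := algebraMap F L) f).mpr fun m => ⟨⟨_, hf m⟩, rfl⟩
  exact Polynomial.map_dvd _ (minpoly.dvd F α (by rwa [← eval_map_algebraMap]))

theorem isIntegral_of_eval_eq_zero {f : L[X]} (hf : ∀ m, f.coeff m ∈ F) (hf0 : f ≠ 0)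
    (hα : f.eval α = 0) : IsIntegral F α := by
  refine minpoly.ne_zero_iff.mp fun h => hf0 ?_
  simpa [h] using map_minpoly_dvd hf hα

theorem map_minpoly_eq {p : L[X]} (hp_monic : p.Monic) (hp_coeff : ∀ m, p.coeff m ∈ F)
    (hp_root : p.eval α = 0)
    (hp_min : ∀ q : L[X], (∀ m, q.coeff m ∈ F) → q ≠ 0 → q.eval α = 0 → p.degree ≤ q.degree) :
    (minpoly F α).map (algebraMap F L) = p := by
  have h_monic := (minpoly.monic (isIntegral_of_eval_eq_zero hp_coeff hp_monic.ne_zero hp_root)).map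
    (algebraMap F L)
  refine (eq_of_monic_of_dvd_of_natDegree_le h_monic hp_monic (map_minpoly_dvd hp_coeff hp_root)
    (natDegree_le_natDegree (hp_min _ (fun m => ?_) h_monic.ne_zero ?_))).symm
  · rw [coeff_map]
    exact ((minpoly F α).coeff m).2
  · rw [eval_map_algebraMap, minpoly.aeval]

theorem degree_le_of_forall_roots_mem [IsAlgClosed L] {p : L[X]} (hp : p ≠ 0)
    (hp_coeff : ∀ m, p.coeff m ∈ F) (hp_root : p.eval α = 0)
    (hp_min : ∀ q : L[X], (∀ m, q.coeff m ∈ K ⊓ F) → q ≠ 0 → q.eval α = 0 → p.degree ≤ q.degree)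
    (hroots : ∀ z ∈ p.roots, z ∈ K) {q : L[X]} (hq_coeff : ∀ m, q.coeff m ∈ F) (hq : q ≠ 0)
    (hq_root : q.eval α = 0) : p.degree ≤ q.degree := by
  have hm := (minpoly.monic (isIntegral_of_eval_eq_zero hp_coeff hp hp_root)).map (algebraMap F L)
  have hm_lifts := (IsAlgClosed.splits _).mem_lift_of_roots_mem_range hm (algebraMap K L)
    fun z hz => ⟨⟨z, hroots z (Multiset.mem_of_le
      (roots.le_of_dvd hp (map_minpoly_dvd hp_coeff hp_root)) hz)⟩, rfl⟩
  refine (hp_min _ (fun i => ⟨?_, ?_⟩) hm.ne_zero ?_).trans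
    (degree_le_of_dvd (map_minpoly_dvd hq_coeff hq_root) hq)
  · obtain ⟨c, hc⟩ := (lifts_iff_coeff_lifts _).mp hm_lifts i
    exact hc ▸ c.2
  · rw [coeff_map]
    exact ((minpoly F α).coeff i).2
  · rw [eval_map_algebraMap, minpoly.aeval]

end Minpoly

section SpectralProjector

variable (F : Type*) {E n : Type*} [Field F] [Field E] [Algebra F E] [Fintype n] [DecidableEq n]

/-- The Lagrange basis polynomial at `x` for the roots of its minimal polynomial: it takes the
value `1` at `x` and vanishes at the other conjugates of a separable `x`. -/
noncomputable def minpolyLagrange (x : E) : E[X] :=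
  C (aeval x (derivative (minpoly F x)))⁻¹ * minpolyDiv F x

/-- The spectral projector at the eigenvalue `x : E` of a matrix `M` over `F` annihilated by the
minimal polynomial of `x`, obtained by evaluating `minpolyLagrange F x` at `M`. -/
noncomputable def spectralProjector (x : E) (M : Matrix n n F) : Matrix n n E :=
  aeval (M.map (algebraMap F E)) (minpolyLagrange F x)

variable {F}

theorem eval_minpolyLagrange_self {x : E} (hx : IsSeparable F x) :
    (minpolyLagrange F x).eval x = 1 := by
  rw [minpolyLagrange, eval_C_mul, eval_minpolyDiv_self,
    inv_mul_cancel₀ (hx.aeval_derivative_ne_zero (minpoly.aeval F x))]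

variable {x : E} {M : Matrix n n F}

theorem map_mul_spectralProjector (hM : aeval M (minpoly F x) = 0) :
    M.map (algebraMap F E) * spectralProjector F x M = x • spectralProjector F x M := by
  have h : aeval (M.map (algebraMap F E)) ((X - C x) * minpolyLagrange F x) = 0 := by
    rw [minpolyLagrange, mul_left_comm, mul_comm (X - C x), minpolyDiv_spec, map_mul,
      ← map_aeval_matrix, hM]
    simp
  rw [map_mul, map_sub, aeval_X, aeval_C, sub_mul, ← Algebra.smul_def] at h
  exact sub_eq_zero.mp h

theorem isIdempotentElem_spectralProjector (hx : IsSeparable F x)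
    (hM : aeval M (minpoly F x) = 0) : IsIdempotentElem (spectralProjector F x M) := by
  have h := aeval_mul_of_mul_eq_smul (map_mul_spectralProjector hM) (minpolyLagrange F x)
  rwa [eval_minpolyLagrange_self hx, one_smul] at h

variable {K : Type*} [Field K] [Algebra F K]

theorem map_spectralProjector (σ : E →ₐ[F] K) :
    (spectralProjector F x M).map σ =
      aeval (M.map (algebraMap F K)) ((minpolyLagrange F x).map (σ : E →+* K)) := by
  rw [← σ.comp_algebraMap]
  exact map_aeval_matrix (σ : E →+* K) _ _

theorem map_spectralProjector_mul (hx : IsSeparable F x) (σ : E →ₐ[F] K) {N : Matrix n n K}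
    (hN : M.map (algebraMap F K) * N = σ x • N) : (spectralProjector F x M).map σ * N = N := by
  rw [map_spectralProjector, aeval_mul_of_mul_eq_smul hN, ← σ.coe_toRingHom, eval_map_apply,
    eval_minpolyLagrange_self hx, map_one, one_smul]

theorem isHermitian_map_spectralProjector [Algebra F ℂ] (hx : IsSeparable F x)
    (hM : aeval M (minpoly F x) = 0) (σ : E →ₐ[F] ℂ) [IsStarNormal (M.map (algebraMap F ℂ))] :
    ((spectralProjector F x M).map σ).IsHermitian := by
  refine isHermitian_of_isIdempotentElem_of_isStarNormal ?_ ?_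
  · exact (isIdempotentElem_spectralProjector hx hM).map (σ : E →+* ℂ).mapMatrix
  · rw [map_spectralProjector]
    exact isStarNormal_aeval _

variable [FiniteDimensional F E] [Algebra.IsSeparable F E] [IsAlgClosed K]

theorem sum_map_spectralProjector (hx : Algebra.adjoin F {x} = ⊤) (M : Matrix n n F) :
    ∑ σ : E →ₐ[F] K, (spectralProjector F x M).map σ = 1 := by
  have h := sum_smul_minpolyDiv_eq_X_pow K hx (r := 0) Module.finrank_pos
  simp only [pow_zero, one_div, smul_eq_C_mul] at h
  simp only [map_spectralProjector, minpolyLagrange]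
  rw [← map_sum, h, map_one]

theorem map_aeval_eq_sum_map_smul_spectralProjector (hx : Algebra.adjoin F {x} = ⊤)
    (hM : aeval M (minpoly F x) = 0) (q : F[X]) :
    (aeval M q).map (algebraMap F K) =
      ∑ σ : E →ₐ[F] K, (aeval x q • spectralProjector F x M).map σ := by
  have h_eigen : aeval (M.map (algebraMap F E)) (q.map (algebraMap F E)) * spectralProjector F x M =
      aeval x q • spectralProjector F x M := by
    rw [aeval_mul_of_mul_eq_smul (map_mul_spectralProjector hM), eval_map_algebraMap]
  calc (aeval M q).map (algebraMap F K)
      = ∑ σ : E →ₐ[F] K, (aeval M q).map (algebraMap F K) * (spectralProjector F x M).map σ := by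
        rw [← Finset.mul_sum, sum_map_spectralProjector hx, mul_one]
    _ = _ := Finset.sum_congr rfl fun σ _ => by
        rw [← h_eigen, ← map_aeval_matrix, ← σ.coe_toRingHom, Matrix.map_mul, Matrix.map_map,
          ← RingHom.coe_comp, AlgHom.comp_algebraMap]

end SpectralProjector

theorem coe_subfieldClosure_eq_setOf_div {K : Type*} [Field K] (T : Subring K) :
    (Subfield.closure (T : Set K) : Set K) = {z | ∃ a ∈ T, ∃ b ∈ T, b ≠ 0 ∧ z = a / b} := by
  ext z
  simp only [SetLike.mem_coe, Subfield.mem_closure_iff, Subring.closure_eq, Set.mem_ofPred_eq]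
  constructor
  · rintro ⟨a, ha, b, hb, rfl⟩
    by_cases h : b = 0
    · exact ⟨0, T.zero_mem, 1, T.one_mem, one_ne_zero, by simp [h]⟩
    · exact ⟨a, ha, b, hb, h, rfl⟩
  · rintro ⟨a, ha, b, hb, -, rfl⟩
    exact ⟨a, ha, b, hb, rfl⟩

theorem exists_ne_zero_forall_mul_coeff_mem {K : Type*} [Field K] {T : Subring K} {q : K[X]}
    (hq : ∀ m, q.coeff m ∈ Subfield.closure (T : Set K)) :
    ∃ b ∈ T, b ≠ 0 ∧ ∀ m, b * q.coeff m ∈ T := by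
  suffices h : ∀ s : Finset ℕ, ∃ b ∈ T, b ≠ 0 ∧ ∀ m ∈ s, b * q.coeff m ∈ T by
    obtain ⟨b, hb, hb0, hbq⟩ := h q.support
    refine ⟨b, hb, hb0, fun m => ?_⟩
    by_cases hm : m ∈ q.support
    · exact hbq m hm
    · simp [notMem_support_iff.mp hm, T.zero_mem]
  intro s
  induction s using Finset.induction_on with
  | empty => exact ⟨1, T.one_mem, one_ne_zero, by simp⟩
  | insert m s _ ih =>
    obtain ⟨b, hb, hb0, hbs⟩ := ih
    obtain ⟨a, ha, c, hc, hc0, hm⟩ := (coe_subfieldClosure_eq_setOf_div T).subset (hq m)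
    refine ⟨b * c, T.mul_mem hb hc, mul_ne_zero hb0 hc0, fun i hi => ?_⟩
    rcases Finset.mem_insert.mp hi with rfl | hi
    · rw [hm, mul_assoc, mul_div_cancel₀ a hc0]
      exact T.mul_mem hb ha
    · rw [mul_right_comm]
      exact T.mul_mem (hbs i hi) hc

/-- The field of fractions `F_T` of `T = R ∩ S`, as a subfield of `ℂ`. -/
noncomputable def commonFractionField (R S : Subring ℂ) : Subfield ℂ :=
  Subfield.closure ((R ⊓ S : Subring ℂ) : Set ℂ)

namespace PreEmbedding

variable {k : ℕ} {R S : Subring ℂ} (Φ : PreEmbedding k S R)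

theorem apply0_apply (s : ℂ) (i j : Fin k) :
    Φ.apply0 s i j = Φ.toFun Unit (of fun _ _ => s) ((), i) ((), j) := rfl

theorem apply0_apply_mem {s : ℂ} (hs : s ∈ S) (i j : Fin k) : Φ.apply0 s i j ∈ R :=
  Φ.mem_R Unit _ (fun _ _ => hs) _ _

theorem apply0_one : Φ.apply0 1 = 1 := by
  have h : (of fun _ _ => 1 : Matrix Unit Unit ℂ) = 1 := by ext; simp
  rw [apply0, h, Φ.map_one, reindex_apply, submatrix_one_equiv]

theorem apply0_add {s t : ℂ} (hs : s ∈ S) (ht : t ∈ S) :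
    Φ.apply0 (s + t) = Φ.apply0 s + Φ.apply0 t :=
  congrArg (reindex (Equiv.punitProd (Fin k)) (Equiv.punitProd (Fin k)))
    (Φ.map_add Unit (of fun _ _ => s) (of fun _ _ => t) (fun _ _ => hs) (fun _ _ => ht))

theorem apply0_mul {s t : ℂ} (hs : s ∈ S) (ht : t ∈ S) :
    Φ.apply0 (s * t) = Φ.apply0 s * Φ.apply0 t := by
  let single (a : ℂ) : Matrix Unit Unit ℂ := of fun _ _ => a
  have h : single (s * t) = single s * single t := by
    ext
    simp [single, mul_apply]
  change reindex _ _ (Φ.toFun Unit (single (s * t))) = _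
  rw [h, Φ.map_mul Unit (single s) (single t) (fun _ _ => hs) fun _ _ => ht]
  simp only [apply0, reindex_apply, submatrix_mul_equiv, single]

theorem apply0_conj {s : ℂ} (hs : s ∈ S) :
    Φ.apply0 (starRingEnd ℂ s) = star (Φ.apply0 s) :=
  congrArg (reindex (Equiv.punitProd (Fin k)) (Equiv.punitProd (Fin k)))
    (Φ.map_conjTranspose Unit (of fun _ _ => s) fun _ _ => hs)

theorem apply0_mul_proj {s : ℂ} (hs : s ∈ S) : Φ.apply0 s * Φ.proj = s • Φ.proj := by
  ext i j
  have h := congr($(Φ.catalytic Unit (of fun _ _ => s) fun _ _ => hs) ((), i) ((), j))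
  simpa [mul_apply, Fintype.sum_prod_type, apply0_apply] using h

theorem apply0_of_mem_inf {c : ℂ} (hc : c ∈ R ⊓ S) :
    Φ.apply0 c = algebraMap ℂ (Matrix (Fin k) (Fin k) ℂ) c := by
  let single (a : ℂ) : Matrix Unit Unit ℂ := of fun _ _ => a
  have map_single_kronecker {a b : ℂ} (ha : a ∈ R ⊓ S) (hb : b ∈ S) :=
    Φ.map_kronecker Unit Unit (single a) (single b)
      (fun _ _ => ha.1) (fun _ _ => ha.2) (fun _ _ => hb)
  have h_comm : kroneckerMap (fun x y : ℂ => x * y) (single 1) (single c) =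
      kroneckerMap (fun x y : ℂ => x * y) (single c) (single 1) := by
    ext
    exact mul_comm _ _
  have h := (map_single_kronecker (R ⊓ S).one_mem hc.2).symm.trans
    ((congrArg _ h_comm).trans (map_single_kronecker hc S.one_mem))
  ext i j
  have hij := congr($h (((), ()), i) (((), ()), j))
  simpa [single, ← apply0_apply, apply0_one, one_apply, algebraMap_matrix_apply] using hij

/-- `Φ₀` as a ring homomorphism. -/
def apply0Hom : S →+* Matrix (Fin k) (Fin k) ℂ where
  toFun s := Φ.apply0 s
  map_one' := Φ.apply0_one
  map_mul' s t := Φ.apply0_mul s.2 t.2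
  map_zero' := by simpa using Φ.apply0_add S.zero_mem S.zero_mem
  map_add' s t := Φ.apply0_add s.2 t.2

theorem isStarNormal_apply0 {s : ℂ} (hs : s ∈ S) : IsStarNormal (Φ.apply0 s) := by
  have hs' := Φ.hS_conj s hs
  refine ⟨?_⟩
  rw [← Φ.apply0_conj hs, commute_iff_eq, ← Φ.apply0_mul hs' hs, mul_comm, Φ.apply0_mul hs hs']

theorem apply0_eval_of_coeff_mem_inf {s : ℂ} (hs : s ∈ S) {q : ℂ[X]}
    (hq : ∀ m, q.coeff m ∈ R ⊓ S) : Φ.apply0 (q.eval s) = aeval (Φ.apply0 s) q := by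
  let T : Subring ℂ := R ⊓ S
  let q' : T[X] := q.toSubring T fun _ h => by
    obtain ⟨m, -, rfl⟩ := mem_coeffs_iff.mp h
    exact hq m
  have hq' : q'.map T.subtype = q := map_toSubring q T _
  have h_hom : Φ.apply0Hom.comp (Subring.inclusion inf_le_right) =
      (algebraMap ℂ (Matrix (Fin k) (Fin k) ℂ)).comp T.subtype :=
    RingHom.ext fun c => Φ.apply0_of_mem_inf c.2
  calc Φ.apply0 (q.eval s)
      = Φ.apply0Hom (q'.eval₂ (Subring.inclusion inf_le_right) ⟨s, hs⟩) := by
        rw [← hq', eval_map]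
        exact congrArg Φ.apply0
          (hom_eval₂ q' (Subring.inclusion inf_le_right) S.subtype ⟨s, hs⟩).symm
    _ = aeval (Φ.apply0 s) q := by
        rw [hom_eval₂, h_hom, ← eval₂_map, hq']
        rfl

theorem apply0_eval {s : ℂ} (hs : s ∈ S) {q : ℂ[X]}
    (hq : ∀ m, q.coeff m ∈ commonFractionField R S) (hqs : q.eval s ∈ S) :
    Φ.apply0 (q.eval s) = aeval (Φ.apply0 s) q := by
  obtain ⟨b, hb, hb0, hbq⟩ := exists_ne_zero_forall_mul_coeff_mem hq
  have h := Φ.apply0_eval_of_coeff_mem_inf hs (q := C b * q) fun m => by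
    rw [coeff_C_mul]
    exact hbq m
  rw [eval_C_mul, Φ.apply0_mul hb.2 hqs, Φ.apply0_of_mem_inf hb, _root_.map_mul, aeval_C,
    ← Algebra.smul_def, ← Algebra.smul_def] at h
  exact smul_right_injective _ hb0 h

theorem apply0_aeval {F : Subfield ℂ} {α : ℂ} (hα : α ∈ S) {M : Matrix (Fin k) (Fin k) F}
    (hM : M.map (algebraMap F ℂ) = Φ.apply0 α) {q : F[X]}
    (hq : ∀ m, (q.coeff m : ℂ) ∈ commonFractionField R S) (hqα : aeval α q ∈ S) :
    Φ.apply0 (aeval α q) = (aeval M q).map (algebraMap F ℂ) := by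
  rw [map_aeval_matrix, hM, ← eval_map_algebraMap]
  refine Φ.apply0_eval hα (fun m => ?_) (by rwa [eval_map_algebraMap])
  rw [coeff_map]
  exact hq m

theorem aeval_minpoly_eq_zero {F : Subfield ℂ} {α : ℂ} (hα : α ∈ S) {M : Matrix (Fin k) (Fin k) F}
    (hM : M.map (algebraMap F ℂ) = Φ.apply0 α)
    (hcoeff : ∀ m, ((minpoly F α).coeff m : ℂ) ∈ commonFractionField R S) :
    aeval M (minpoly F α) = 0 := by
  have h := Φ.apply0_aeval hα hM hcoeff (by rw [minpoly.aeval]; exact S.zero_mem)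
  rw [minpoly.aeval, show Φ.apply0 0 = 0 from Φ.apply0Hom.map_zero] at h
  exact map_injective (algebraMap F ℂ).injective
    (h.symm.trans (Matrix.map_zero _ (map_zero _)).symm)

theorem exists_projector_apply0_eq_sum_map {F : Subfield ℂ} (hRF : ∀ r ∈ R, r ∈ F)
    {α : ℂ} (hα : α ∈ S) [FiniteDimensional F F⟮α⟯]
    (hcoeff : ∀ m, ((minpoly F α).coeff m : ℂ) ∈ commonFractionField R S)
    (hS : ∀ s ∈ S, ∃ q : F[X], aeval α q = s ∧
      ∀ m, (q.coeff m : ℂ) ∈ commonFractionField R S) :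
    ∃ P : Matrix (Fin k) (Fin k) F⟮α⟯, P ≠ 0 ∧ (P.map F⟮α⟯.val).IsHermitian ∧ P * P = P ∧
      ∀ s ∈ S, ∃ x : F⟮α⟯, (x : ℂ) = s ∧
        Φ.apply0 s = ∑ σ : F⟮α⟯ →ₐ[F] ℂ, (x • P).map σ := by
  let M : Matrix (Fin k) (Fin k) F :=
    of fun i j => ⟨Φ.apply0 α i j, hRF _ (Φ.apply0_apply_mem hα i j)⟩
  have hM : M.map (algebraMap F ℂ) = Φ.apply0 α := rfl
  let a := AdjoinSimple.gen F α
  have ha_int : IsIntegral F a := Algebra.IsIntegral.isIntegral a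
  have ha_sep : IsSeparable F a := Algebra.IsSeparable.isSeparable F a
  have ha_top : Algebra.adjoin F {a} = ⊤ :=
    (adjoin.powerBasis ((AdjoinSimple.isIntegral_gen F α).mp ha_int)).adjoin_gen_eq_top
  have ha_zero : aeval M (minpoly F a) = 0 := by
    rw [minpoly_gen, Φ.aeval_minpoly_eq_zero hα hM hcoeff]
  refine ⟨spectralProjector F a M, fun h => ?_, ?_,
    isIdempotentElem_spectralProjector ha_sep ha_zero, fun s hs => ?_⟩
  · have h_proj := map_spectralProjector_mul (M := M) ha_sep F⟮α⟯.val (N := Φ.proj)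
      (Φ.apply0_mul_proj hα)
    rw [h] at h_proj
    exact Φ.proj_ne_zero (by simpa using h_proj.symm)
  · have : IsStarNormal (M.map (algebraMap F ℂ)) := Φ.isStarNormal_apply0 hα
    exact isHermitian_map_spectralProjector ha_sep ha_zero F⟮α⟯.val
  · obtain ⟨q, rfl, hq⟩ := hS s hs
    refine ⟨aeval a q, AdjoinSimple.coe_aeval_gen_apply F α q, ?_⟩
    rw [Φ.apply0_aeval hα hM hq hs, map_aeval_eq_sum_map_smul_spectralProjector ha_top ha_zero]

end PreEmbedding

theorem exists_fin_enumeration_ringHom {K : Type*} [Field K] {F : Subfield K}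
    (L : IntermediateField F K) [FiniteDimensional F L] :
    ∃ (n : ℕ) (σs : Fin n → (L.toSubfield →+* K)), Function.Injective σs ∧
      (∀ (t : Fin n) (x : L.toSubfield), (x : K) ∈ F → σs t x = x) ∧
      (∀ σ : L.toSubfield →+* K, (∀ x : L.toSubfield, (x : K) ∈ F → σ x = x) → ∃ t, σ = σs t) ∧
      ∀ {A : Type*} [AddCommMonoid A] (f : (L →+* K) → A),
        ∑ σ : L →ₐ[F] K, f σ = ∑ t, f (σs t) := by
  let e := Fintype.equivFin (L →ₐ[F] K)
  refine ⟨_, fun t => (e.symm t : L →+* K),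
    AlgHom.coe_ringHom_injective.comp e.symm.injective,
    fun t x hx => (e.symm t).commutes ⟨x, hx⟩, fun σ hσ => ?_, fun f => ?_⟩
  · let τ : L →ₐ[F] K :=
      { (σ : L →+* K) with commutes' := fun x => hσ ⟨x, L.algebraMap_mem x⟩ x.2 }
    exact ⟨e τ, congrArg AlgHom.toRingHom (e.symm_apply_apply τ).symm⟩
  · exact (e.symm.sum_comp fun σ => f (σ : L →+* K)).symm

theorem subfieldClosure_insert_eq {L : Type*} [Field L] (F : Subfield L) (x : L) :
    Subfield.closure (insert x (F : Set L)) = F⟮x⟯.toSubfield := by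
  have h_range : Set.range (algebraMap F L) = F := Subtype.range_coe
  rw [adjoin_toSubfield, h_range, Set.union_singleton]

theorem exists_aeval_eq_sum_mul_pow {L : Type*} [Field L] {F T : Subfield L} (hTF : T ≤ F) (α : L)
    {n : ℕ} {c : Fin n → L} (hc : ∀ j, c j ∈ T) :
    ∃ q : F[X], aeval α q = ∑ j, c j * α ^ (j : ℕ) ∧ ∀ m, (q.coeff m : L) ∈ T := by
  let q : T[X] := ∑ j : Fin n, C ⟨c j, hc j⟩ * X ^ (j : ℕ)
  refine ⟨q.map (Subfield.inclusion hTF), ?_, fun m => ?_⟩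
  · rw [aeval_def, eval₂_map, eval₂_finsetSum]
    refine Finset.sum_congr rfl fun j _ => ?_
    rw [eval₂_mul, eval₂_C, eval₂_X_pow]
    rfl
  · rw [coeff_map]
    exact (q.coeff m).2

theorem preEmbedding_apply0_eq_fieldTrace_general (k : ℕ) (R S : Subring ℂ)
    (FT FR : Set ℂ)
    (hFT : FT = {z : ℂ | ∃ a ∈ R ⊓ S, ∃ b ∈ R ⊓ S, b ≠ 0 ∧ z = a / b})
    (hFR : FR = {z : ℂ | ∃ a ∈ R, ∃ b ∈ R, b ≠ 0 ∧ z = a / b})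
    (α : ℂ) (hα : α ∈ S)
    (p : Polynomial ℂ)
    (hp_monic : p.Monic) (hp_coeff : ∀ m, p.coeff m ∈ FT) (hp_root : p.eval α = 0)
    (hp_min : ∀ q : Polynomial ℂ, (∀ m, q.coeff m ∈ FR) → q ≠ 0 → q.eval α = 0 →
      p.degree ≤ q.degree)
    (hSgen : ∀ s ∈ S, ∃ (n : ℕ) (c : Fin n → ℂ),
      (∀ j, c j ∈ FT) ∧ s = ∑ j, c j * α ^ (j : ℕ))
    (E : PreEmbedding k S R) :
    ∃ (P : Matrix (Fin k) (Fin k) ℂ) (n : ℕ)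
      (σs : Fin n → (Subfield.closure (insert α FR) →+* ℂ)),
      P ≠ 0 ∧
      (∀ i j, P i j ∈ Subfield.closure (insert α FR)) ∧
      Pᴴ = P ∧ P * P = P ∧
      Function.Injective σs ∧
      (∀ (t : Fin n) (x : Subfield.closure (insert α FR)),
        (x : ℂ) ∈ FR → σs t x = (x : ℂ)) ∧
      (∀ σ : Subfield.closure (insert α FR) →+* ℂ,
        (∀ x : Subfield.closure (insert α FR), (x : ℂ) ∈ FR → σ x = (x : ℂ)) →
        ∃ t, σ = σs t) ∧
      ∀ s : ℂ, s ∈ S →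
        ∀ hmem : ∀ i j, (s • P) i j ∈ Subfield.closure (insert α FR),
          E.apply0 s = ∑ t : Fin n, Matrix.of fun i j => σs t ⟨(s • P) i j, hmem i j⟩ := by
  rw [← coe_subfieldClosure_eq_setOf_div] at hFT hFR
  subst hFT hFR
  have hTF : commonFractionField R S ≤ Subfield.closure (R : Set ℂ) :=
    Subfield.closure_mono fun _ h => h.1
  have hp_coeffR (m : ℕ) : p.coeff m ∈ Subfield.closure (R : Set ℂ) := hTF (hp_coeff m)
  have hp : (minpoly _ α).map _ = p := map_minpoly_eq hp_monic hp_coeffR hp_root hp_min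
  have h_coeff (m : ℕ) : ((minpoly (Subfield.closure (R : Set ℂ)) α).coeff m : ℂ) ∈
      commonFractionField R S := by
    have h := hp_coeff m
    rwa [← hp, coeff_map] at h
  have := adjoin.finiteDimensional (isIntegral_of_eval_eq_zero hp_coeffR hp_monic.ne_zero hp_root)
  obtain ⟨P, hP0, hP_herm, hP_idem, hP⟩ := E.exists_projector_apply0_eq_sum_map
    (fun _ hr => Subfield.subset_closure hr) hα h_coeff fun s hs => by
      obtain ⟨n, c, hc, rfl⟩ := hSgen s hs
      exact exists_aeval_eq_sum_mul_pow hTF α hc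
  rw [subfieldClosure_insert_eq]
  obtain ⟨n, σs, h_inj, h_fix, h_all, h_sum⟩ :=
    exists_fin_enumeration_ringHom (Subfield.closure (R : Set ℂ))⟮α⟯
  refine ⟨P.map (IntermediateField.val _), n, σs, fun h => hP0 ?_, fun i j => (P i j).2, hP_herm,
    by rw [← Matrix.map_mul, hP_idem], h_inj, h_fix, h_all, fun s hs hmem => ?_⟩
  · exact map_injective (RingHom.injective _) (h.trans (Matrix.map_zero _ (map_zero _)).symm)
  · obtain ⟨x, rfl, hx⟩ := hP s hs
    exact hx.trans (h_sum fun σ => (x • P).map σ)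

/-- Corollary `RSinterplay`. Under the hypotheses that `S` is generated
over `F_T = Frac(R ∩ S)` by powers of `α`, that the splitting field `K` of the minimal
polynomial of `α` over `F_T` is conjugation-closed, that `E = F_R(α)` is Kroneckerian over
`F_R = Frac(R)`, and that `F_T = K ∩ F_R`, every pre-embedding `Φ` of dimension `k` from `S`
to `R` admits a nonzero orthogonal projector `Π` with entries in `E` such that for all
`s ∈ S`, `Φ₀(s)` is the entrywise field trace `Σ_σ σ(s • Π)` over the `F_R`-embeddings
`σ : E → ℂ`. -/
theorem preEmbedding_apply0_eq_fieldTrace (k : ℕ) (R S : Subring ℂ)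
    (FT FR : Set ℂ)
    (hFT : FT = {z : ℂ | ∃ a ∈ R ⊓ S, ∃ b ∈ R ⊓ S, b ≠ 0 ∧ z = a / b})
    (hFR : FR = {z : ℂ | ∃ a ∈ R, ∃ b ∈ R, b ≠ 0 ∧ z = a / b})
    (α : ℂ) (hα : α ∈ S)
    (p : Polynomial ℂ) (d : ℕ)
    (hp_monic : p.Monic) (hp_coeff : ∀ m, p.coeff m ∈ FT) (hp_root : p.eval α = 0)
    (hp_deg : p.natDegree = d)
    (hp_min : ∀ q : Polynomial ℂ, (∀ m, q.coeff m ∈ FT) → q ≠ 0 → q.eval α = 0 →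
      p.degree ≤ q.degree)
    (hSgen : ∀ s ∈ S, ∃ (n : ℕ) (c : Fin n → ℂ),
      (∀ j, c j ∈ FT) ∧ s = ∑ j, c j * α ^ (j : ℕ))
    (K : Subfield ℂ)
    (hFTK : FT ⊆ (K : Set ℂ))
    (hroots : ∀ z ∈ p.roots, z ∈ K)
    (hKmin : ∀ K' : Subfield ℂ, FT ⊆ (K' : Set ℂ) → (∀ z ∈ p.roots, z ∈ K') → K ≤ K')
    (hKconj : ∀ z ∈ K, (starRingEnd ℂ) z ∈ K)
    (hKron : ∀ σ : Subfield.closure (insert α FR) →+* ℂ,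
      (∀ x : Subfield.closure (insert α FR), (x : ℂ) ∈ FR → σ x = (x : ℂ)) →
      ∀ (z : ℂ) (hz : z ∈ Subfield.closure (insert α FR))
        (hz' : (starRingEnd ℂ) z ∈ Subfield.closure (insert α FR)),
        σ ⟨(starRingEnd ℂ) z, hz'⟩ = (starRingEnd ℂ) (σ ⟨z, hz⟩))
    (hFT_eq : FT = (K : Set ℂ) ∩ FR)
    (E : PreEmbedding k S R) :
    ∃ (P : Matrix (Fin k) (Fin k) ℂ) (n : ℕ)
      (σs : Fin n → (Subfield.closure (insert α FR) →+* ℂ)),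
      P ≠ 0 ∧
      (∀ i j, P i j ∈ Subfield.closure (insert α FR)) ∧
      Pᴴ = P ∧ P * P = P ∧
      Function.Injective σs ∧
      (∀ (t : Fin n) (x : Subfield.closure (insert α FR)),
        (x : ℂ) ∈ FR → σs t x = (x : ℂ)) ∧
      (∀ σ : Subfield.closure (insert α FR) →+* ℂ,
        (∀ x : Subfield.closure (insert α FR), (x : ℂ) ∈ FR → σ x = (x : ℂ)) →
        ∃ t, σ = σs t) ∧
      ∀ s : ℂ, s ∈ S →
        ∀ hmem : ∀ i j, (s • P) i j ∈ Subfield.closure (insert α FR),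
          E.apply0 s = ∑ t : Fin n, Matrix.of fun i j => σs t ⟨(s • P) i j, hmem i j⟩ := by
  rw [← coe_subfieldClosure_eq_setOf_div] at hFR
  subst hFR hFT_eq
  exact preEmbedding_apply0_eq_fieldTrace_general k R S _ _ hFT
    (coe_subfieldClosure_eq_setOf_div R) α hα p hp_monic hp_coeff hp_root
    (fun _ => degree_le_of_forall_roots_mem hp_monic.ne_zero (fun m => (hp_coeff m).2) hp_root
      hp_min hroots) hSgen E
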